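/- Let a > 0 be real with a ≠ 1, let m be an integer, and let s, s' be real numbers with m < s < m+1 and m < s' < m+1, and let z, z' > 0 be real numbers. Then the limit of f_q(z q^{s}, a) as q → 0⁺ exists, the limit of f_q(z' q^{s'}, a) as q → 0⁺ exists, and the two limits are equal. That is, the q → 0⁺ limit of f_q(z q^{s}, a) is a locally constant function of s on the complement of the integers and is independent of z there. -/

import Mathlib

/-!
Absorbing the prefactor of `θ_q` into its product gives `θ_q(x) = -x^{-1/2} (x; q)_∞ (q/x; q)_∞`,
so that the square roots cancel in `f_q`. If `q ≪ w ≪ 1` as `q → 0`, then `(y; q)_∞ → 1` for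
`y = w, q/w, aw, q/(aw)`, whereas `(a; q)_∞ → 1 - a`; hence `f_q(w, a) → 1/(a - 1)`. This covers
`w = z q^s` with `0 < s < 1`, and the quasi-periodicity `f_q(qw, a) = a⁻¹ f_q(w, a)` moves any
other interval `(m, m + 1)` to `(0, 1)`, giving the limit `a⁻ᵐ / (a - 1)`.
-/

open Filter Topology

/-- The q-theta function
`θ_q(x) = (x^{1/2} - x^{-1/2}) ∏_{i=1}^∞ (1 - x q^i)(1 - x⁻¹ q^i)`. -/
noncomputable def qTheta (q x : ℝ) : ℝ :=
  (Real.sqrt x - (Real.sqrt x)⁻¹) *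
    ∏' i : ℕ, (1 - x * q ^ (i + 1)) * (1 - x⁻¹ * q ^ (i + 1))

/-- `f_q(z, a) = θ_q(a z) / (θ_q(a) θ_q(z))`. -/
noncomputable def fTheta (q z a : ℝ) : ℝ :=
  qTheta q (a * z) / (qTheta q a * qTheta q z)

section NormedField

variable {𝕜 : Type*} [NormedField 𝕜] {q x : 𝕜}

/-- The infinite `q`-Pochhammer symbol `(x; q)_∞ = ∏_{i ≥ 0} (1 - x q^i)`, the factor from which
theta functions are built; meaningful for `‖q‖ < 1`. -/
noncomputable def qPochhammerInf (q x : 𝕜) : 𝕜 :=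
  ∏' i : ℕ, (1 - x * q ^ i)

/-- The modified theta function `θ(x; q) = (x; q)_∞ (q/x; q)_∞`, which is `θ_q` without its
square-root prefactor and so makes sense over any normed field. -/
noncomputable def modifiedTheta (q x : 𝕜) : 𝕜 :=
  qPochhammerInf q x * qPochhammerInf q (q / x)

@[simp]
lemma qPochhammerInf_zero_left (x : 𝕜) : qPochhammerInf 0 x = 1 - x := by
  rw [qPochhammerInf, tprod_eq_mulSingle 0 fun i hi => by simp [hi]]
  simp

variable [CompleteSpace 𝕜]

lemma multipliable_one_sub_mul_pow (hq : ‖q‖ < 1) (x : 𝕜) :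
    Multipliable fun i : ℕ => 1 - x * q ^ i := by
  have hsum : Summable fun i : ℕ => ‖-(x * q ^ i)‖ := by
    simpa using (summable_geometric_of_lt_one (norm_nonneg q) hq).mul_left ‖x‖
  simpa [sub_eq_add_neg] using multipliable_one_add_of_summable hsum

lemma qPochhammerInf_eq_one_sub_mul (hq : ‖q‖ < 1) (x : 𝕜) :
    qPochhammerInf q x = (1 - x) * qPochhammerInf q (q * x) := by
  have hshift (i : ℕ) : 1 - x * q ^ (i + 1) = 1 - q * x * q ^ i := by ring
  have hmul : Multipliable fun i : ℕ => 1 - x * q ^ (i + 1) := by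
    simpa only [hshift] using multipliable_one_sub_mul_pow hq (q * x)
  calc qPochhammerInf q x
      = (1 - x * q ^ 0) * ∏' i : ℕ, (1 - x * q ^ (i + 1)) := tprod_eq_zero_mul' hmul
    _ = (1 - x) * qPochhammerInf q (q * x) := by
        simp only [hshift, pow_zero, mul_one, qPochhammerInf]

lemma continuousAt_qPochhammerInf (hq : ‖q‖ < 1) (x : 𝕜) :
    ContinuousAt (fun p : 𝕜 × 𝕜 => qPochhammerInf p.1 p.2) (q, x) := by
  obtain ⟨r, hqr, hr⟩ := exists_between hq
  have hsum : Summable fun i : ℕ => (‖x‖ + 1) * r ^ i :=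
    (summable_geometric_of_lt_one ((norm_nonneg q).trans hqr.le) hr).mul_left _
  have hterm (i : ℕ) : Tendsto (fun p : 𝕜 × 𝕜 => -(p.2 * p.1 ^ i)) (𝓝 (q, x)) (𝓝 (-(x * q ^ i))) :=
    Continuous.tendsto (by fun_prop) (q, x)
  have hnorm_fst : ∀ᶠ p : 𝕜 × 𝕜 in 𝓝 (q, x), ‖p.1‖ < r :=
    continuous_fst.norm.continuousAt.eventually_lt_const hqr
  have hnorm_snd : ∀ᶠ p : 𝕜 × 𝕜 in 𝓝 (q, x), ‖p.2‖ < ‖x‖ + 1 :=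
    continuous_snd.norm.continuousAt.eventually_lt_const (lt_add_one ‖x‖)
  have hbound : ∀ᶠ p : 𝕜 × 𝕜 in 𝓝 (q, x), ∀ i : ℕ, ‖-(p.2 * p.1 ^ i)‖ ≤ (‖x‖ + 1) * r ^ i := by
    filter_upwards [hnorm_fst, hnorm_snd] with p hp₁ hp₂ i
    rw [norm_neg, norm_mul, norm_pow]
    gcongr
  simpa only [ContinuousAt, qPochhammerInf, sub_eq_add_neg] using
    tendsto_tprod_one_add_of_dominated_convergence hsum hterm hbound

lemma modifiedTheta_mul_left (hq₀ : q ≠ 0) (hq : ‖q‖ < 1) (hx : x ≠ 0) :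
    modifiedTheta q (q * x) = -x⁻¹ * modifiedTheta q x := by
  have hdiv : q / (q * x) = x⁻¹ := by field_simp
  rw [modifiedTheta, modifiedTheta, hdiv, qPochhammerInf_eq_one_sub_mul hq x⁻¹,
    qPochhammerInf_eq_one_sub_mul hq x, ← div_eq_mul_inv]
  field_simp
  ring

lemma tendsto_modifiedTheta {ι : Type*} {l : Filter ι} {q x : ι → 𝕜} {x₀ : 𝕜}
    (hq : Tendsto q l (𝓝 0)) (hx : Tendsto x l (𝓝 x₀))
    (hqx : Tendsto (fun i => q i / x i) l (𝓝 0)) :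
    Tendsto (fun i => modifiedTheta (q i) (x i)) l (𝓝 (1 - x₀)) := by
  have hcont (y : 𝕜) := continuousAt_qPochhammerInf (norm_zero.trans_lt one_pos) y
  simpa [modifiedTheta] using ((hcont x₀).tendsto.comp (hq.prodMk_nhds hx)).mul
    ((hcont 0).tendsto.comp (hq.prodMk_nhds hqx))

end NormedField

section RealTheta

variable {q a x z : ℝ}

lemma qTheta_eq_modifiedTheta (hq : |q| < 1) (hx : 0 < x) :
    qTheta q x = -(√x)⁻¹ * modifiedTheta q x := by
  have hprod (y : ℝ) : (fun i : ℕ => 1 - y * q ^ (i + 1)) = fun i => 1 - q * y * q ^ i := by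
    ext i; ring
  have hmul (y : ℝ) : Multipliable fun i : ℕ => 1 - y * q ^ (i + 1) :=
    hprod y ▸ multipliable_one_sub_mul_pow hq (q * y)
  have hprefactor : √x - (√x)⁻¹ = -(√x)⁻¹ * (1 - x) := by
    field_simp
    rw [Real.sq_sqrt hx.le]
    ring
  calc qTheta q x
      = (√x - (√x)⁻¹) * (qPochhammerInf q (q * x) * qPochhammerInf q (q / x)) := by
        rw [qTheta, (hmul x).tprod_mul (hmul x⁻¹), hprod, hprod, ← div_eq_mul_inv]
        rfl
    _ = -(√x)⁻¹ * modifiedTheta q x := by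
        rw [hprefactor, modifiedTheta, qPochhammerInf_eq_one_sub_mul hq x]
        ring

lemma fTheta_eq_modifiedTheta (hq : |q| < 1) (hz : 0 < z) (ha : 0 < a) :
    fTheta q z a = -modifiedTheta q (a * z) / (modifiedTheta q a * modifiedTheta q z) := by
  rw [fTheta, qTheta_eq_modifiedTheta hq (mul_pos ha hz), qTheta_eq_modifiedTheta hq ha,
    qTheta_eq_modifiedTheta hq hz, Real.sqrt_mul ha.le]
  field_simp

lemma fTheta_mul_left (hq₀ : 0 < q) (hq : q < 1) (hz : 0 < z) (ha : 0 < a) :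
    fTheta q (q * z) a = a⁻¹ * fTheta q z a := by
  have hq' : |q| < 1 := by rwa [abs_of_pos hq₀]
  rw [fTheta_eq_modifiedTheta hq' (mul_pos hq₀ hz) ha, fTheta_eq_modifiedTheta hq' hz ha,
    mul_left_comm, modifiedTheta_mul_left hq₀.ne' hq' (mul_pos ha hz).ne',
    modifiedTheta_mul_left hq₀.ne' hq' hz.ne']
  field_simp

lemma fTheta_zpow_mul_left (hq₀ : 0 < q) (hq : q < 1) (hz : 0 < z) (ha : 0 < a) (m : ℤ) :
    fTheta q (q ^ m * z) a = a⁻¹ ^ m * fTheta q z a := by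
  have hstep (n : ℤ) : fTheta q (q ^ (n + 1) * z) a = a⁻¹ * fTheta q (q ^ n * z) a := by
    rw [zpow_add_one₀ hq₀.ne', mul_comm (q ^ n) q, mul_assoc,
      fTheta_mul_left hq₀ hq (by positivity) ha]
  have ha' : a⁻¹ ≠ 0 := inv_ne_zero ha.ne'
  induction m with
  | zero => simp
  | succ n ih => rw [hstep, ih, zpow_add_one₀ ha']; ring
  | pred n ih =>
    refine mul_left_cancel₀ ha' ?_
    rw [← hstep, sub_add_cancel, ih, zpow_sub_one₀ ha']
    field_simp

lemma tendsto_fTheta {ι : Type*} {l : Filter ι} {q w : ι → ℝ} (ha : 0 < a) (ha1 : a ≠ 1)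
    (hw : Tendsto w l (𝓝[>] 0)) (hqw : Tendsto (fun i => q i / w i) l (𝓝 0)) :
    Tendsto (fun i => fTheta (q i) (w i) a) l (𝓝 (a - 1)⁻¹) := by
  obtain ⟨hw₀, hw_pos⟩ := tendsto_nhdsWithin_iff.1 hw
  have hq : Tendsto q l (𝓝 0) := by
    have hmul : Tendsto (fun i => q i / w i * w i) l (𝓝 0) := by simpa using hqw.mul hw₀
    exact hmul.congr' (hw_pos.mono fun i hi => div_mul_cancel₀ _ (ne_of_gt hi))
  have hθ_a : Tendsto (fun i => modifiedTheta (q i) a) l (𝓝 (1 - a)) :=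
    tendsto_modifiedTheta hq tendsto_const_nhds (by simpa using hq.div_const a)
  have hθ_w : Tendsto (fun i => modifiedTheta (q i) (w i)) l (𝓝 (1 - 0)) :=
    tendsto_modifiedTheta hq hw₀ hqw
  have hθ_aw : Tendsto (fun i => modifiedTheta (q i) (a * w i)) l (𝓝 (1 - 0)) :=
    tendsto_modifiedTheta hq (by simpa using hw₀.const_mul a)
      (by simpa [div_mul_eq_div_div_swap] using hqw.div_const a)
  have hlim : -(1 - 0) / ((1 - a) * (1 - 0)) = (a - 1)⁻¹ := by
    rw [← neg_sub a 1, sub_zero, mul_one, neg_div_neg_eq, one_div]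
  have hne : (1 - a) * (1 - 0) ≠ 0 := by simpa [sub_eq_zero] using ha1.symm
  have hq_abs : ∀ᶠ i in l, |q i| < 1 := hq.abs.eventually_lt_const (by simp)
  refine hlim ▸ (hθ_aw.neg.div (hθ_a.mul hθ_w) hne).congr' ?_
  filter_upwards [hw_pos, hq_abs] with i hwi hqi
  exact (fTheta_eq_modifiedTheta hqi hwi ha).symm

lemma tendsto_const_mul_rpow_nhdsGT_zero {c t : ℝ} (hc : 0 < c) (ht : 0 < t) :
    Tendsto (fun q : ℝ => c * q ^ t) (𝓝[>] 0) (𝓝[>] 0) := by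
  refine tendsto_nhdsWithin_iff.2 ⟨?_, ?_⟩
  · have hcont : Continuous fun q : ℝ => c * q ^ t := (Real.continuous_rpow_const ht.le).const_mul c
    simpa [Real.zero_rpow ht.ne'] using hcont.continuousWithinAt.tendsto (x := 0) (s := Set.Ioi 0)
  · filter_upwards [self_mem_nhdsWithin] with q hq
    exact mul_pos hc (Real.rpow_pos_of_pos hq t)

lemma tendsto_fTheta_mul_rpow_of_lt_one {t : ℝ} (ha : 0 < a) (ha1 : a ≠ 1) (ht₀ : 0 < t)
    (ht₁ : t < 1) (hz : 0 < z) :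
    Tendsto (fun q : ℝ => fTheta q (z * q ^ t) a) (𝓝[>] 0) (𝓝 (a - 1)⁻¹) := by
  refine tendsto_fTheta ha ha1 (tendsto_const_mul_rpow_nhdsGT_zero hz ht₀) ?_
  have hratio : Tendsto (fun q : ℝ => z⁻¹ * q ^ (1 - t)) (𝓝[>] 0) (𝓝 0) :=
    (tendsto_nhdsWithin_iff.1
      (tendsto_const_mul_rpow_nhdsGT_zero (inv_pos.2 hz) (sub_pos.2 ht₁))).1
  refine hratio.congr' ?_
  filter_upwards [self_mem_nhdsWithin] with q (hq : 0 < q)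
  rw [Real.rpow_sub hq, Real.rpow_one]
  field_simp

lemma tendsto_fTheta_mul_rpow {m : ℤ} {s : ℝ} (ha : 0 < a) (ha1 : a ≠ 1) (hms : m < s)
    (hsm : s < m + 1) (hz : 0 < z) :
    Tendsto (fun q : ℝ => fTheta q (z * q ^ s) a) (𝓝[>] 0) (𝓝 (a⁻¹ ^ m * (a - 1)⁻¹)) := by
  have hfract := tendsto_fTheta_mul_rpow_of_lt_one ha ha1 (sub_pos.2 hms)
    (sub_lt_iff_lt_add'.2 hsm) hz
  refine (hfract.const_mul (a⁻¹ ^ m)).congr' ?_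
  filter_upwards [Ioo_mem_nhdsGT one_pos] with q ⟨hq₀, hq₁⟩
  have hsplit : q ^ m * (z * q ^ (s - m)) = z * q ^ s := by
    rw [mul_left_comm, ← Real.rpow_intCast, ← Real.rpow_add hq₀, add_sub_cancel]
  rw [← hsplit, fTheta_zpow_mul_left hq₀ hq₁ (by positivity) ha]

end RealTheta

/-- Let `a > 0`, `a ≠ 1`, `m : ℤ`, and let `s, s'` be reals with
`m < s < m + 1` and `m < s' < m + 1`, and `z, z' > 0`. Then the `q → 0⁺` limits of
`f_q(z q^s, a)` and `f_q(z' q^{s'}, a)` exist and are equal: the limit is a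
locally constant function of `s` off the integers, independent of `z` there. -/
theorem fTheta_limit_locally_constant (a : ℝ) (ha : 0 < a) (ha1 : a ≠ 1)
    (m : ℤ) (s s' : ℝ) (hs : (m : ℝ) < s) (hs' : s < (m : ℝ) + 1)
    (ht : (m : ℝ) < s') (ht' : s' < (m : ℝ) + 1)
    (z z' : ℝ) (hz : 0 < z) (hz' : 0 < z') :
    ∃ L : ℝ,
      Tendsto (fun q : ℝ => fTheta q (z * q ^ s) a)
        (𝓝[Set.Ioo (0:ℝ) 1] 0) (𝓝 L) ∧
      Tendsto (fun q : ℝ => fTheta q (z' * q ^ s') a)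
        (𝓝[Set.Ioo (0:ℝ) 1] 0) (𝓝 L) := by
  rw [nhdsWithin_Ioo_eq_nhdsGT one_pos]
  exact ⟨_, tendsto_fTheta_mul_rpow ha ha1 hs hs' hz, tendsto_fTheta_mul_rpow ha ha1 ht ht' hz'⟩
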